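/- (Hyperplane restriction) Let R be a standard graded algebra over an arbitrary field K and let d > 0 be a degree. Then there exist finitely many proper linear subspaces L_1,…,L_m of the affine space 𝔸(R_1) such that for every linear form l ∉ L_1 ∪ … ∪ L_m one has dim_K (R/lR)_d ≤ (dim_K R_d)_{⟨d⟩}. -/

import Mathlib

/-- Polynomial functions on a `K`-vector space `V`: the subalgebra of `V → K`
generated by the linear functionals. -/
def polyFuns (K V : Type*) [Field K] [AddCommGroup V] [Module K V] : Subalgebra K (V → K) :=
  Algebra.adjoin K {f : V → K | ∃ φ : V →ₗ[K] K, ⇑φ = f}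

/-- A subset of (the affine space of) a `K`-vector space is Zariski closed if it is the
common zero locus of a family of polynomial functions. -/
def IsZClosed (K : Type*) {V : Type*} [Field K] [AddCommGroup V] [Module K V]
    (Z : Set V) : Prop :=
  ∃ S : Set (V → K), (∀ f ∈ S, f ∈ polyFuns K V) ∧ Z = {v | ∀ f ∈ S, f v = 0}

/-- A subset is Zariski open if its complement is Zariski closed. -/
def IsZOpen (K : Type*) {V : Type*} [Field K] [AddCommGroup V] [Module K V]
    (U : Set V) : Prop :=
  IsZClosed K Uᶜ

/-- An irreducible variety: a nonempty Zariski closed set which is not the union of two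
proper closed subsets. -/
def IsIrredVariety (K : Type*) {V : Type*} [Field K] [AddCommGroup V] [Module K V]
    (W : Set V) : Prop :=
  IsZClosed K W ∧ W.Nonempty ∧
    ∀ Z₁ Z₂ : Set V, IsZClosed K Z₁ → IsZClosed K Z₂ → W ⊆ Z₁ ∪ Z₂ → (W ⊆ Z₁ ∨ W ⊆ Z₂)

/-- Auxiliary recursion for `wordIdeal`: letters are booleans, `true` standing for the
letter `c` (colon) and `false` for the letter `s` (sum). The natural number argument keeps
track of which linear form is to be used next (0-indexed). -/
def wordIdealAux {R : Type*} [CommRing R] (l : ℕ → R) : ℕ → Ideal R → List Bool → Ideal R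
  | _, I, [] => I
  | j, I, a :: o =>
      wordIdealAux l (j + 1)
        (if a then I.colon (Ideal.span {l j}) else I ⊔ Ideal.span {l j}) o

/-- The ideal `I_{l,o}` attached to a sequence of (linear) forms `l` and a word `o` in the
letters `{c, s}` (here `c = true`, `s = false`): starting from `(0)`, the `j`-th letter
either colons (`c`) or adds (`s`) the `j`-th form. -/
def wordIdeal {R : Type*} [CommRing R] (l : ℕ → R) (o : List Bool) : Ideal R :=
  wordIdealAux l 0 ⊥ o

/-- The degree `d` component `I ∩ R_d` of an ideal `I`, as a `K`-subspace of `𝒜 d`. -/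
def homComp {K R : Type*} [Field K] [CommRing R] [Algebra K R]
    (𝒜 : ℕ → Submodule K R) (I : Ideal R) (d : ℕ) : Submodule K (𝒜 d) :=
  Submodule.comap (𝒜 d).subtype (Submodule.restrictScalars K I)

/-- `dim_K (I)_d`, the dimension of the degree `d` component of the (homogeneous) ideal `I`. -/
noncomputable def homDim {K R : Type*} [Field K] [CommRing R] [Algebra K R]
    (𝒜 : ℕ → Submodule K R) (I : Ideal R) (d : ℕ) : ℕ :=
  Module.finrank K (homComp 𝒜 I d)

/-- `dim_K (R/I)_d`, the dimension of the degree `d` component of `R/I` for a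
(homogeneous) ideal `I`, computed as `dim 𝒜 d / (I ∩ 𝒜 d)`. -/
noncomputable def quotDim {K R : Type*} [Field K] [CommRing R] [Algebra K R]
    (𝒜 : ℕ → Submodule K R) (I : Ideal R) (d : ℕ) : ℕ :=
  Module.finrank K ((𝒜 d) ⧸ homComp 𝒜 I d)

/-- `macaulayDown c d = c_⟨d⟩`: if `c = C(k_d,d) + … + C(k_1,1)` is the `d`-th Macaulay
representation of `c`, then `c_⟨d⟩ = C(k_d - 1,d) + … + C(k_1 - 1,1)`; computed greedily. -/
def macaulayDown : ℕ → ℕ → ℕ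
  | _, 0 => 0
  | c, d + 1 =>
      let k := Nat.findGreatest (fun k => Nat.choose k (d + 1) ≤ c) (c + d + 1)
      Nat.choose (k - 1) (d + 1) + macaulayDown (c - Nat.choose k (d + 1)) d

/-- Property (Gr,d) for the linear forms `l 0, …, l (r-1)` (letters: `true = c`,
`false = s`): for every word `o` of length `i ≤ r`,
(1) if `m ⊄ I_o` and `i < r` then `l_{i+1} ∉ I_o`;
(2) if `i = r` and `|o|_c < d` then `m ⊆ I_o`;
(3) if `i ≤ r - 2` then `dim (I_{o,c,s})_{d - |o|_c - 1} ≤ dim (I_{o,s,c})_{d - |o|_c - 1}`. -/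
def GrProp {K R : Type*} [Field K] [CommRing R] [Algebra K R]
    (𝒜 : ℕ → Submodule K R) [GradedAlgebra 𝒜] (l : ℕ → R) (r d : ℕ) : Prop :=
  ∀ o : List Bool, o.length ≤ r →
    (¬ (HomogeneousIdeal.irrelevant 𝒜).toIdeal ≤ wordIdeal l o → o.length < r →
        l o.length ∉ wordIdeal l o) ∧
    (o.length = r → o.count true < d →
        (HomogeneousIdeal.irrelevant 𝒜).toIdeal ≤ wordIdeal l o) ∧
    (o.length + 2 ≤ r →
        homDim 𝒜 (wordIdeal l (o ++ [true, false])) (d - o.count true - 1) ≤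
          homDim 𝒜 (wordIdeal l (o ++ [false, true])) (d - o.count true - 1))

/-!
Green's argument, carried out for a graded module `M` over `Sym V` generated in degree zero.
For a subspace `W ⊆ M (n + 2)` put `c = dim M (n + 2) / W` and
`f l = dim M (n + 2) / (W + l M (n + 1))`. The right exact sequence
`M (n + 1) / l₁⁻¹W → M (n + 2) / W → M (n + 2) / (W + l₁ M (n + 1)) → 0`
stays right exact after killing the multiples of a second form `l₂`, so for `l₂` generic with
respect to `l₁`, induction on the degree and on `W` gives
`f l₂ ≤ (f l₁)_⟨n+2⟩ + (c - f l₁)_⟨n+1⟩`. If `f l₁ > c_⟨n+2⟩`, the right-hand side is smaller than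
`f l₁`; so a form violating the bound can always be replaced by a violating one with a smaller
value of `f`, unless the violating forms lie in a finite union of proper subspaces.
-/

section MacaulayDown

lemma macaulayDown_zero_right (c : ℕ) : macaulayDown c 0 = 0 := rfl

lemma le_choose_succ_add {d k : ℕ} (h : d ≤ k) : k ≤ Nat.choose k (d + 1) + d := by
  induction k, h using Nat.le_induction with
  | base => exact Nat.le_add_left d _
  | succ k hk ih =>
    have hpos := Nat.choose_pos hk
    rw [Nat.choose_succ_succ']
    omega

lemma macaulayDown_choose_add_of_lt {k d a : ℕ} (h : a < Nat.choose k d) :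
    macaulayDown (Nat.choose k (d + 1) + a) (d + 1) =
      Nat.choose (k - 1) (d + 1) + macaulayDown a d := by
  have hdk : d ≤ k := Nat.choose_ne_zero_iff.1 (by omega)
  have hbound := le_choose_succ_add hdk
  have hgreedy : Nat.findGreatest (fun j => Nat.choose j (d + 1) ≤ Nat.choose k (d + 1) + a)
      (Nat.choose k (d + 1) + a + d + 1) = k := by
    rw [Nat.findGreatest_eq_iff]
    refine ⟨by omega, fun _ => Nat.le_add_right _ _, fun j hkj _ hj => ?_⟩
    have hmono : Nat.choose (k + 1) (d + 1) ≤ Nat.choose j (d + 1) := Nat.choose_le_choose _ hkj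
    rw [Nat.choose_succ_succ'] at hmono
    omega
  rw [macaulayDown]
  simp only [hgreedy, Nat.add_sub_cancel_left]

lemma exists_eq_choose_add (c d : ℕ) :
    ∃ k a, a < Nat.choose k d ∧ c = Nat.choose k (d + 1) + a := by
  induction c with
  | zero => exact ⟨d, 0, by simp, by simp⟩
  | succ c ih =>
    obtain ⟨k, a, ha, rfl⟩ := ih
    by_cases hlt : a + 1 < Nat.choose k d
    · exact ⟨k, a + 1, hlt, rfl⟩
    · have hdk : d ≤ k := Nat.choose_ne_zero_iff.1 (by omega)
      refine ⟨k + 1, 0, Nat.choose_pos (by omega), ?_⟩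
      rw [Nat.choose_succ_succ']
      omega

lemma macaulayDown_zero_left (d : ℕ) : macaulayDown 0 d = 0 := by
  induction d with
  | zero => rfl
  | succ d ih =>
    simpa [ih, Nat.choose_eq_zero_of_lt] using
      macaulayDown_choose_add_of_lt (k := d) (d := d) (a := 0) (by simp)

lemma macaulayDown_choose (k d : ℕ) :
    macaulayDown (Nat.choose k (d + 1)) (d + 1) = Nat.choose (k - 1) (d + 1) := by
  rcases lt_or_ge k d with hkd | hdk
  · rw [Nat.choose_eq_zero_of_lt (by omega), Nat.choose_eq_zero_of_lt (by omega),
      macaulayDown_zero_left]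
  · simpa [macaulayDown_zero_left] using macaulayDown_choose_add_of_lt (Nat.choose_pos hdk)

lemma macaulayDown_one_right (c : ℕ) : macaulayDown c 1 = c - 1 := by
  simpa using macaulayDown_choose c 0

lemma macaulayDown_one_left (d : ℕ) : macaulayDown 1 d = 0 := by
  cases d with
  | zero => rfl
  | succ d => simpa using macaulayDown_choose (d + 1) d

lemma choose_succ_eq_choose_pred_add {k : ℕ} (hk : 0 < k) (d : ℕ) :
    Nat.choose k (d + 1) = Nat.choose (k - 1) d + Nat.choose (k - 1) (d + 1) :=
  Nat.choose_eq_choose_pred_add hk d.succ_pos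

/-- Unlike in `macaulayDown_choose_add_of_lt`, the boundary value `a = C(k, d + 1)` is allowed:
Pascal's rule applies on both sides, which it does not when the lower degree is `0`. -/
lemma macaulayDown_choose_add_of_le {k d a : ℕ} (h : a ≤ Nat.choose k (d + 1)) :
    macaulayDown (Nat.choose k (d + 1 + 1) + a) (d + 1 + 1) =
      Nat.choose (k - 1) (d + 1 + 1) + macaulayDown a (d + 1) := by
  rcases h.lt_or_eq with hlt | rfl
  · exact macaulayDown_choose_add_of_lt hlt
  rcases Nat.eq_zero_or_pos k with rfl | hk
  · simp [macaulayDown_zero_left]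
  rw [macaulayDown_choose, add_comm (Nat.choose k (d + 1 + 1)), ← Nat.choose_succ_succ',
    macaulayDown_choose, Nat.add_sub_cancel, choose_succ_eq_choose_pred_add hk, add_comm]

lemma macaulayDown_succ_mem_Icc (c d : ℕ) :
    macaulayDown (c + 1) d ∈ Set.Icc (macaulayDown c d) (macaulayDown c d + 1) := by
  rcases d with _ | d
  · simp [macaulayDown_zero_right]
  induction d generalizing c with
  | zero => rw [macaulayDown_one_right, macaulayDown_one_right, Set.mem_Icc]; omega
  | succ d ih =>
    obtain ⟨k, a, ha, rfl⟩ := exists_eq_choose_add c (d + 1)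
    rw [add_assoc _ a 1, macaulayDown_choose_add_of_le ha, macaulayDown_choose_add_of_lt ha,
      add_assoc]
    exact ⟨Nat.add_le_add_left (ih a).1 _, Nat.add_le_add_left (ih a).2 _⟩

lemma monotone_macaulayDown (d : ℕ) : Monotone (macaulayDown · d) :=
  monotone_nat_of_le_succ fun c => (macaulayDown_succ_mem_Icc c d).1

lemma macaulayDown_add_le (c e d : ℕ) : macaulayDown (c + e) d ≤ macaulayDown c d + e := by
  induction e with
  | zero => exact le_rfl
  | succ e ih => exact (macaulayDown_succ_mem_Icc (c + e) d).2.trans (Nat.succ_le_succ ih)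

lemma macaulayDown_lt_self {c : ℕ} (hc : 0 < c) (d : ℕ) : macaulayDown c d < c := by
  have hlip := macaulayDown_add_le 1 (c - 1) d
  rw [macaulayDown_one_left, Nat.add_sub_cancel' hc] at hlip
  omega

lemma macaulayDown_lt_choose_pred {c d k : ℕ} (hdk : d < k) (hc : c < Nat.choose k d) :
    macaulayDown c d < Nat.choose (k - 1) d := by
  induction d generalizing k c with
  | zero => simp [macaulayDown_zero_right]
  | succ d ih =>
    obtain ⟨j, a, ha, rfl⟩ := exists_eq_choose_add c d
    have hjk : j < k := by
      by_contra! hkj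
      have hmono := Nat.choose_le_choose (d + 1) hkj
      omega
    have hdj : d ≤ j := Nat.choose_ne_zero_iff.1 (by omega)
    rw [macaulayDown_choose_add_of_lt ha]
    rcases hdj.eq_or_lt with rfl | hdj
    · obtain rfl : a = 0 := by simpa using ha
      rw [macaulayDown_zero_left, Nat.choose_eq_zero_of_lt (by omega)]
      exact Nat.choose_pos (by omega)
    · calc Nat.choose (j - 1) (d + 1) + macaulayDown a d
          < Nat.choose (j - 1) (d + 1) + Nat.choose (j - 1) d := Nat.add_lt_add_left (ih hdj ha) _
        _ = Nat.choose j (d + 1) := by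
          rw [choose_succ_eq_choose_pred_add (Nat.zero_lt_of_lt hdj) d, add_comm]
        _ ≤ Nat.choose (k - 1) (d + 1) := Nat.choose_le_choose _ (by omega)

lemma sub_macaulayDown_le_choose_pred {c d k : ℕ} (hk : 0 < k) (hc : c ≤ Nat.choose k (d + 1)) :
    c - macaulayDown c (d + 1) ≤ Nat.choose (k - 1) d := by
  have hlip := macaulayDown_add_le c (Nat.choose k (d + 1) - c) (d + 1)
  rw [Nat.add_sub_cancel' hc, macaulayDown_choose] at hlip
  have hpascal := choose_succ_eq_choose_pred_add hk d
  omega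

lemma macaulayDown_choose_pred_add_sub_le {a d k : ℕ} (hk : 0 < k)
    (ha : a ≤ Nat.choose k (d + 1)) :
    macaulayDown (Nat.choose (k - 1) (d + 1) + a - (macaulayDown a (d + 1) + 1)) (d + 1) ≤
      Nat.choose (k - 1 - 1) (d + 1) + macaulayDown (a - (macaulayDown a (d + 1) + 1)) d := by
  rcases Nat.eq_zero_or_pos a with rfl | hpos
  · have hmono := monotone_macaulayDown (d + 1) (Nat.sub_le (Nat.choose (k - 1) (d + 1)) 1)
    simpa [macaulayDown_zero_left, macaulayDown_choose] using hmono
  · have hlt := macaulayDown_lt_self hpos (d + 1)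
    have hsub := sub_macaulayDown_le_choose_pred hk ha
    rw [Nat.add_sub_assoc hlt, macaulayDown_choose_add_of_lt (by omega)]

/-- The case `a = c_⟨d+1⟩ + 1` of `macaulayDown_add_macaulayDown_sub_lt`, to which the others
reduce because `a - a_⟨d+1⟩ - (c - a)_⟨d⟩` is nondecreasing in `a`. -/
lemma macaulayDown_succ_add_macaulayDown_sub_le (c d : ℕ) :
    macaulayDown (macaulayDown c (d + 1) + 1) (d + 1) +
      macaulayDown (c - (macaulayDown c (d + 1) + 1)) d ≤ macaulayDown c (d + 1) := by
  induction d generalizing c with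
  | zero => simp [macaulayDown_one_right, macaulayDown_zero_right]
  | succ d ih =>
    obtain ⟨k, a, ha, rfl⟩ := exists_eq_choose_add c (d + 1)
    have hdk : d + 1 ≤ k := Nat.choose_ne_zero_iff.1 (by omega)
    rcases hdk.eq_or_lt with rfl | hdk
    · obtain rfl : a = 0 := by simpa using ha
      simp [macaulayDown_zero_left, macaulayDown_one_left]
    have hs : macaulayDown a (d + 1) + 1 ≤ Nat.choose (k - 1) (d + 1) :=
      macaulayDown_lt_choose_pred hdk ha
    have hpascal := choose_succ_eq_choose_pred_add (k := k) (by omega) (d + 1)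
    have hpascal' := choose_succ_eq_choose_pred_add (k := k - 1) (by omega) (d + 1)
    have hcancel : Nat.choose k (d + 1 + 1) + a -
        (Nat.choose (k - 1) (d + 1 + 1) + (macaulayDown a (d + 1) + 1)) =
        Nat.choose (k - 1) (d + 1) + a - (macaulayDown a (d + 1) + 1) := by omega
    have htail := macaulayDown_choose_pred_add_sub_le (Nat.zero_lt_of_lt hdk) ha.le
    have hrec := ih a
    rw [macaulayDown_choose_add_of_lt ha, add_assoc _ _ 1, hcancel,
      macaulayDown_choose_add_of_le hs]
    omega

lemma macaulayDown_add_macaulayDown_sub_lt {a c d : ℕ} (h : macaulayDown c (d + 1) < a) :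
    macaulayDown a (d + 1) + macaulayDown (c - a) d < a := by
  obtain ⟨e, rfl⟩ := Nat.exists_eq_add_of_le (show macaulayDown c (d + 1) + 1 ≤ a from h)
  have hlip := macaulayDown_add_le (macaulayDown c (d + 1) + 1) e (d + 1)
  have hmono : macaulayDown (c - (macaulayDown c (d + 1) + 1 + e)) d ≤
      macaulayDown (c - (macaulayDown c (d + 1) + 1)) d := monotone_macaulayDown d (by omega)
  have hcritical := macaulayDown_succ_add_macaulayDown_sub_le c d
  omega

end MacaulayDown

section Quotient

open LinearMap Module

variable {K M₀ M₁ M₂ : Type*} [Field K] [AddCommGroup M₀] [Module K M₀]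
  [AddCommGroup M₁] [Module K M₁] [AddCommGroup M₂] [Module K M₂]

lemma finrank_quotient_anti [FiniteDimensional K M₁] {W W' : Submodule K M₁} (h : W ≤ W') :
    finrank K (M₁ ⧸ W') ≤ finrank K (M₁ ⧸ W) :=
  LinearMap.finrank_le_finrank_of_surjective (Submodule.factor_surjective h)

lemma finrank_quotient_lt_finrank_quotient [FiniteDimensional K M₁] {W W' : Submodule K M₁}
    (h : W < W') : finrank K (M₁ ⧸ W') < finrank K (M₁ ⧸ W) := by
  have hlt := Submodule.finrank_lt_finrank_of_lt h
  have hW := W.finrank_quotient_add_finrank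
  have hW' := W'.finrank_quotient_add_finrank
  omega

lemma finrank_quotient_comap_add_finrank_quotient_sup_range [FiniteDimensional K M₂]
    (f : M₁ →ₗ[K] M₂) (W : Submodule K M₂) :
    finrank K (M₁ ⧸ W.comap f) + finrank K (M₂ ⧸ W ⊔ range f) = finrank K (M₂ ⧸ W) := by
  have hker : W.comap f = ker (W.mkQ ∘ₗ f) := by rw [ker_comp, Submodule.ker_mkQ]
  have hrange : range (W.mkQ ∘ₗ f) = (range f).map W.mkQ := range_comp _ _
  rw [hker, (quotKerEquivRange _).finrank_eq, hrange,
    ← (Submodule.quotientQuotientEquivQuotientSup W (range f)).finrank_eq, add_comm]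
  exact Submodule.finrank_quotient_add_finrank _

lemma finrank_quotient_sup_range_le_add [FiniteDimensional K M₁] [FiniteDimensional K M₂]
    {f₁ f₂ : M₁ →ₗ[K] M₂} {g₁ g₂ : M₀ →ₗ[K] M₁} (hcomm : f₁ ∘ₗ g₂ = f₂ ∘ₗ g₁)
    (W : Submodule K M₂) :
    finrank K (M₂ ⧸ W ⊔ range f₂) ≤
      finrank K (M₂ ⧸ W ⊔ range f₁ ⊔ range f₂) + finrank K (M₁ ⧸ W.comap f₁ ⊔ range g₂) := by
  have hle : W.comap f₁ ⊔ range g₂ ≤ (W ⊔ range f₂).comap f₁ := by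
    refine sup_le (Submodule.comap_mono le_sup_left) ?_
    rw [← Submodule.map_le_iff_le_comap, ← range_comp, hcomm]
    exact (range_comp_le_range g₁ f₂).trans le_sup_right
  rw [← finrank_quotient_comap_add_finrank_quotient_sup_range f₁, sup_right_comm, add_comm]
  exact Nat.add_le_add_left (finrank_quotient_anti hle) _

end Quotient

section GenericFilter

open Filter

/-- The filter of sets containing the complement of a finite union of proper linear subspaces.
It is `⊥` when `V` itself is such a union, as happens over a finite field in dimension at least
two. -/
def genericFilter (K V : Type*) [Field K] [AddCommGroup V] [Module K V] : Filter V :=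
  generate ((fun L : Submodule K V => (L : Set V)ᶜ) '' {L | L ≠ ⊤})

variable {K V : Type*} [Field K] [AddCommGroup V] [Module K V]

lemma eventually_genericFilter_notMem {L : Submodule K V} (hL : L ≠ ⊤) :
    ∀ᶠ l in genericFilter K V, l ∉ L :=
  mem_generate_of_mem ⟨L, hL, rfl⟩

lemma exists_fin_of_eventually_genericFilter {p : V → Prop} (h : ∀ᶠ l in genericFilter K V, p l) :
    ∃ (m : ℕ) (L : Fin m → Submodule K V), (∀ i, L i ≠ ⊤) ∧ ∀ l, (∀ i, l ∉ L i) → p l := by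
  obtain ⟨s, hs, hsfin, hst⟩ := Set.exists_subset_image_finite_and.1 (mem_generate_iff.1 h)
  obtain ⟨m, L, -, rfl⟩ := hsfin.fin_param
  refine ⟨m, L, fun i => hs ⟨i, rfl⟩, fun l hl => hst ?_⟩
  simpa using hl

lemma eventually_le_of_descent {α β : Type*} [LinearOrder β] [WellFoundedLT β] {F : Filter α}
    {f : α → β} {b : β} (h : ∀ᶠ x in F, b < f x → ∀ᶠ y in F, f y < f x) :
    ∀ᶠ x in F, f x ≤ b := by
  by_contra hnot
  have hfreq : ∃ᶠ x in F, b < f x ∧ ∀ᶠ y in F, f y < f x :=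
    ((not_eventually.1 hnot).and_eventually h).mono fun x hx =>
      ⟨not_le.1 hx.1, hx.2 (not_le.1 hx.1)⟩
  obtain ⟨x, hx, hmin⟩ := exists_minimalFor_of_wellFoundedLT _ f hfreq.exists
  obtain ⟨y, hy, hyx⟩ := (hfreq.and_eventually hx.2).exists
  exact (hmin hy hyx.le).not_gt hyx

end GenericFilter

section GradedModule

open LinearMap Module

variable {K V : Type*} [Field K] [AddCommGroup V] [Module K V]
  {M : ℕ → Type*} [∀ n, AddCommGroup (M n)] [∀ n, Module K (M n)]

/-- The multiplication maps `μ n : V → Hom (M n) (M (n + 1))` make `⨁ n, M n` a graded module over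
the symmetric algebra of `V` that is generated by `M 0`. -/
structure IsGeneratedInDegreeZero (μ : ∀ n, V →ₗ[K] M n →ₗ[K] M (n + 1)) : Prop where
  comm : ∀ n l l', μ (n + 1) l ∘ₗ μ n l' = μ (n + 1) l' ∘ₗ μ n l
  iSup_range_eq_top : ∀ n, ⨆ l, range (μ n l) = ⊤

/-- `GreenBound μ W` is the assertion of Green's theorem for the quotient `M (n + 1) / W`: for
generic `l` the dimension of `M (n + 1) / (W + l M n)` is at most `(dim M (n + 1) / W)_⟨n+1⟩`. -/
def GreenBound (μ : ∀ n, V →ₗ[K] M n →ₗ[K] M (n + 1)) {n : ℕ} (W : Submodule K (M (n + 1))) :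
    Prop :=
  ∀ᶠ l in genericFilter K V, finrank K (M (n + 1) ⧸ W ⊔ range (μ n l)) ≤
    macaulayDown (finrank K (M (n + 1) ⧸ W)) (n + 1)

lemma greenBound_top (μ : ∀ n, V →ₗ[K] M n →ₗ[K] M (n + 1)) (n : ℕ) :
    GreenBound μ (⊤ : Submodule K (M (n + 1))) :=
  Filter.Eventually.of_forall fun l => by
    rw [top_sup_eq, finrank_zero_of_subsingleton]
    exact Nat.zero_le _

namespace IsGeneratedInDegreeZero

variable {μ : ∀ n, V →ₗ[K] M n →ₗ[K] M (n + 1)}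

lemma eventually_not_range_le (hμ : IsGeneratedInDegreeZero μ) {n : ℕ}
    {W : Submodule K (M (n + 1))} (hW : W ≠ ⊤) :
    ∀ᶠ l in genericFilter K V, ¬ range (μ n l) ≤ W := by
  have hmem (l : V) : l ∈ ker ((μ n).compr₂ W.mkQ) ↔ range (μ n l) ≤ W := by
    rw [mem_ker, range_le_iff_comap, LinearMap.ext_iff, Submodule.eq_top_iff']
    simp
  have hproper : ker ((μ n).compr₂ W.mkQ) ≠ ⊤ := fun htop => hW <| by
    rw [eq_top_iff, ← hμ.iSup_range_eq_top n]
    exact iSup_le fun l => (hmem l).1 (htop ▸ Submodule.mem_top)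
  simpa only [hmem] using eventually_genericFilter_notMem hproper

variable [∀ n, FiniteDimensional K (M n)]

lemma eventually_finrank_quotient_sup_range_lt (hμ : IsGeneratedInDegreeZero μ) {n : ℕ}
    {W : Submodule K (M (n + 1))} (hW : W ≠ ⊤) :
    ∀ᶠ l in genericFilter K V,
      finrank K (M (n + 1) ⧸ W ⊔ range (μ n l)) < finrank K (M (n + 1) ⧸ W) :=
  (hμ.eventually_not_range_le hW).mono fun _ hl =>
    finrank_quotient_lt_finrank_quotient (left_lt_sup.2 hl)

lemma greenBound_of_forall_gt (hμ : IsGeneratedInDegreeZero μ) {n : ℕ}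
    {W : Submodule K (M (n + 2))} (hW : W ≠ ⊤)
    (hdegree : ∀ W' : Submodule K (M (n + 1)), GreenBound μ W')
    (hgt : ∀ W' > W, GreenBound μ W') : GreenBound μ W := by
  refine eventually_le_of_descent ?_
  filter_upwards [hμ.eventually_not_range_le hW] with l₁ hl₁ hviolates
  filter_upwards [hgt _ (left_lt_sup.2 hl₁), hdegree (W.comap (μ (n + 1) l₁))] with l₂ hsup hcomap
  have hadd := finrank_quotient_comap_add_finrank_quotient_sup_range (μ (n + 1) l₁) W
  rw [Nat.eq_sub_of_add_eq hadd] at hcomap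
  calc finrank K (M (n + 2) ⧸ W ⊔ range (μ (n + 1) l₂))
      ≤ finrank K (M (n + 2) ⧸ W ⊔ range (μ (n + 1) l₁) ⊔ range (μ (n + 1) l₂)) +
          finrank K (M (n + 1) ⧸ W.comap (μ (n + 1) l₁) ⊔ range (μ n l₂)) :=
        finrank_quotient_sup_range_le_add (hμ.comm n l₁ l₂) W
    _ ≤ _ := Nat.add_le_add hsup hcomap
    _ < finrank K (M (n + 2) ⧸ W ⊔ range (μ (n + 1) l₁)) :=
        macaulayDown_add_macaulayDown_sub_lt hviolates

theorem greenBound (hμ : IsGeneratedInDegreeZero μ) {n : ℕ} (W : Submodule K (M (n + 1))) :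
    GreenBound μ W := by
  induction n with
  | zero =>
    rcases eq_or_ne W ⊤ with rfl | hW
    · exact greenBound_top μ 0
    filter_upwards [hμ.eventually_finrank_quotient_sup_range_lt hW] with l hl
    rw [macaulayDown_one_right]
    exact Nat.le_sub_one_of_lt hl
  | succ n hdegree =>
    induction W using WellFoundedGT.induction with
    | ind W hgt =>
      rcases eq_or_ne W ⊤ with rfl | hW
      · exact greenBound_top μ (n + 1)
      · exact hμ.greenBound_of_forall_gt hW hdegree hgt

end IsGeneratedInDegreeZero

theorem hyperplane_restriction_general [∀ n, FiniteDimensional K (M n)]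
    {μ : ∀ n, V →ₗ[K] M n →ₗ[K] M (n + 1)} (hμ : IsGeneratedInDegreeZero μ) (n : ℕ) :
    ∃ (m : ℕ) (L : Fin m → Submodule K V), (∀ i, L i ≠ ⊤) ∧
      ∀ l : V, (∀ i, l ∉ L i) →
        finrank K (M (n + 1) ⧸ range (μ n l)) ≤ macaulayDown (finrank K (M (n + 1))) (n + 1) := by
  refine exists_fin_of_eventually_genericFilter ((hμ.greenBound (n := n) ⊥).mono fun l hl => ?_)
  rwa [bot_sup_eq, (Submodule.quotEquivOfEqBot ⊥ rfl).finrank_eq] at hl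

end GradedModule

section StandardGradedAlgebra

open LinearMap Module

variable {K R : Type*} [Field K] [CommRing R] [Algebra K R] {𝒜 : ℕ → Submodule K R}

lemma fg_of_succ_eq_mul (h0 : (𝒜 0).FG) (h1 : (𝒜 1).FG) (hstd : ∀ n, 𝒜 (n + 1) = 𝒜 1 * 𝒜 n)
    (n : ℕ) : (𝒜 n).FG := by
  induction n with
  | zero => exact h0
  | succ n ih => exact hstd n ▸ h1.mul ih

/-- Multiplication of a linear form and a form of degree `n`. -/
def linearFormMul (hstd : ∀ n, 𝒜 (n + 1) = 𝒜 1 * 𝒜 n) (n : ℕ) :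
    𝒜 1 →ₗ[K] 𝒜 n →ₗ[K] 𝒜 (n + 1) :=
  LinearMap.mk₂ K (fun l x => ⟨l * x, hstd n ▸ Submodule.mul_mem_mul l.2 x.2⟩)
    (fun _ _ _ => Subtype.ext (add_mul _ _ _)) (fun _ _ _ => Subtype.ext (smul_mul_assoc _ _ _))
    (fun _ _ _ => Subtype.ext (mul_add _ _ _)) (fun _ _ _ => Subtype.ext (mul_smul_comm _ _ _))

lemma isGeneratedInDegreeZero_linearFormMul (hstd : ∀ n, 𝒜 (n + 1) = 𝒜 1 * 𝒜 n) :
    IsGeneratedInDegreeZero (linearFormMul hstd) where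
  comm n l l' := LinearMap.ext fun x => Subtype.ext (mul_left_comm (l : R) l' x)
  iSup_range_eq_top n := by
    have hle : 𝒜 (n + 1) ≤ (⨆ l, range (linearFormMul hstd n l)).map (𝒜 (n + 1)).subtype := by
      conv_lhs => rw [hstd n]
      refine Submodule.mul_le.2 fun l hl x hx => ?_
      exact ⟨linearFormMul hstd n ⟨l, hl⟩ ⟨x, hx⟩,
        Submodule.mem_iSup_of_mem ⟨l, hl⟩ (mem_range_self _ _), rfl⟩
    refine eq_top_iff.2 fun y _ => ?_
    obtain ⟨z, hz, hzy⟩ := hle y.2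
    rwa [← Subtype.ext hzy]

lemma quotDim_span_singleton_le (hstd : ∀ n, 𝒜 (n + 1) = 𝒜 1 * 𝒜 n) (n : ℕ)
    [FiniteDimensional K (𝒜 (n + 1))] (l : 𝒜 1) :
    quotDim 𝒜 (Ideal.span {(l : R)}) (n + 1) ≤
      finrank K (𝒜 (n + 1) ⧸ range (linearFormMul hstd n l)) := by
  refine finrank_quotient_anti ?_
  rintro _ ⟨x, rfl⟩
  exact Ideal.mul_mem_right _ _ (Ideal.mem_span_singleton_self _)

end StandardGradedAlgebra

/-- **Hyperplane restriction (main theorem).**  For a standard graded algebra `R` over an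
arbitrary field `K` and a degree `d > 0` there are finitely many proper linear subspaces
`L_1, …, L_m` of `𝔸(R_1)` such that every linear form `l ∉ L_1 ∪ … ∪ L_m` satisfies
`dim_K (R/lR)_d ≤ (dim_K R_d)_⟨d⟩`. -/
theorem hyperplane_restriction
    {K R : Type*} [Field K] [CommRing R] [Algebra K R]
    (𝒜 : ℕ → Submodule K R) [GradedAlgebra 𝒜]
    (h0 : 𝒜 0 = (1 : Submodule K R)) (hstd : ∀ n, 𝒜 (n + 1) = 𝒜 1 * 𝒜 n)
    [FiniteDimensional K (𝒜 1)] (d : ℕ) (hd : 0 < d) :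
    ∃ (m : ℕ) (L : Fin m → Submodule K (𝒜 1)), (∀ i, L i ≠ ⊤) ∧
      ∀ l : 𝒜 1, (∀ i, l ∉ L i) →
        quotDim 𝒜 (Ideal.span {(l : R)}) d ≤ macaulayDown (Module.finrank K (𝒜 d)) d := by
  obtain ⟨n, rfl⟩ := Nat.exists_eq_add_one.2 hd
  have hfin (k : ℕ) : FiniteDimensional K (𝒜 k) := Module.Finite.iff_fg.2 <|
    fg_of_succ_eq_mul (by rw [h0, Submodule.one_eq_span]; exact Submodule.fg_span_singleton 1)
      (Module.Finite.iff_fg.1 inferInstance) hstd k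
  obtain ⟨m, L, hL, h⟩ :=
    hyperplane_restriction_general (isGeneratedInDegreeZero_linearFormMul hstd) n
  exact ⟨m, L, hL, fun l hl => (quotDim_span_singleton_le hstd n l).trans (h l hl)⟩
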